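/- Tsarev compatibility of the system for R_i (Proposition, part (i), identity (c101)): Let U ⊆ ℝ^N be open with coordinates λ₁,…,λ_N, and let ξ₁,…,ξ_N, τ : U → ℂ be C² functions with τ taking values in the upper half-plane, satisfying the elliptic Gibbons–Tsarev system. Define Γ_{ij} := −(1/(4πi)) (S'(ξ_j,τ)/S'(ξ_i,τ)) S''(ξ_i−ξ_j,τ) ∂τ/∂λ_j for i ≠ j. Assume all theta-function values appearing in denominators (including S'(ξ_i,τ)) are nonzero on U. Then for any pairwise distinct indices i, j, k one has ∂Γ_{ij}/∂λ_k = Γ_{ij}Γ_{jk} + Γ_{ik}Γ_{kj} − Γ_{ik}Γ_{ij} on U; in particular ∂Γ_{ij}/∂λ_k = ∂Γ_{ik}/∂λ_j, so the linear system ∂R_i/∂λ_j = Γ_{ij}(R_j − R_i) (i ≠ j) is compatible in Tsarev's sense. -/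

import Mathlib

open Complex

/-- Jacobi theta function θ₁(u,τ). -/
noncomputable def theta1 (u τ : ℂ) : ℂ :=
  -∑' k : ℤ, Complex.exp ((Real.pi : ℂ) * Complex.I * τ * ((k : ℂ) + 1/2)^2
      + 2 * (Real.pi : ℂ) * Complex.I * (u + 1/2) * ((k : ℂ) + 1/2))

/-- Jacobi theta function θ₂(u,τ). -/
noncomputable def theta2 (u τ : ℂ) : ℂ :=
  ∑' k : ℤ, Complex.exp ((Real.pi : ℂ) * Complex.I * τ * ((k : ℂ) + 1/2)^2
      + 2 * (Real.pi : ℂ) * Complex.I * u * ((k : ℂ) + 1/2))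

/-- Jacobi theta function θ₃(u,τ). -/
noncomputable def theta3 (u τ : ℂ) : ℂ :=
  ∑' k : ℤ, Complex.exp ((Real.pi : ℂ) * Complex.I * τ * (k : ℂ)^2
      + 2 * (Real.pi : ℂ) * Complex.I * u * (k : ℂ))

/-- Jacobi theta function θ₄(u,τ). -/
noncomputable def theta4 (u τ : ℂ) : ℂ :=
  ∑' k : ℤ, Complex.exp ((Real.pi : ℂ) * Complex.I * τ * (k : ℂ)^2
      + 2 * (Real.pi : ℂ) * Complex.I * (u + 1/2) * (k : ℂ))

/-- ζ_a(u,τ) = θ_a'(u,τ)/θ_a(u,τ). -/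
noncomputable def zeta1 (u τ : ℂ) : ℂ := deriv (fun v => theta1 v τ) u / theta1 u τ
noncomputable def zeta2 (u τ : ℂ) : ℂ := deriv (fun v => theta2 v τ) u / theta2 u τ
noncomputable def zeta3 (u τ : ℂ) : ℂ := deriv (fun v => theta3 v τ) u / theta3 u τ
noncomputable def zeta4 (u τ : ℂ) : ℂ := deriv (fun v => theta4 v τ) u / theta4 u τ

/-- ℘_a(u,τ) = −∂_u ζ_a(u,τ). -/
noncomputable def wp1 (u τ : ℂ) : ℂ := -deriv (fun v => zeta1 v τ) u
noncomputable def wp2 (u τ : ℂ) : ℂ := -deriv (fun v => zeta2 v τ) u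
noncomputable def wp1' (u τ : ℂ) : ℂ := deriv (fun v => wp1 v τ) u
noncomputable def wp2' (u τ : ℂ) : ℂ := deriv (fun v => wp2 v τ) u

/-- S'(u,τ) = ζ₁(u,τ) − ζ₄(u,τ). -/
noncomputable def Sp (u τ : ℂ) : ℂ := zeta1 u τ - zeta4 u τ
/-- S''(u,τ) = ∂_u S'(u,τ). -/
noncomputable def Spp (u τ : ℂ) : ℂ := deriv (fun v => Sp v τ) u
/-- S'''(u,τ) = ∂_u S''(u,τ). -/
noncomputable def Sppp (u τ : ℂ) : ℂ := deriv (fun v => Spp v τ) u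

/-- Partial derivative in the j-th coordinate of a ℂ-valued function on ℝ^N. -/
noncomputable def pdC {N : ℕ} (j : Fin N) (f : (Fin N → ℝ) → ℂ) (x : Fin N → ℝ) : ℂ :=
  fderiv ℝ f x (Pi.single j 1)

/-- Partial derivative in the j-th coordinate of an ℝ-valued function on ℝ^d. -/
noncomputable def pd {d : ℕ} (j : Fin d) (f : (Fin d → ℝ) → ℝ) (x : Fin d → ℝ) : ℝ :=
  fderiv ℝ f x (Pi.single j 1)

/-- Γ_{ij} = −(1/(4πi)) (S'(ξ_j,τ)/S'(ξ_i,τ)) S''(ξ_i−ξ_j,τ) ∂τ/∂λ_j. -/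
noncomputable def Gam {N : ℕ} (ξ : Fin N → (Fin N → ℝ) → ℂ) (τ : (Fin N → ℝ) → ℂ)
    (i j : Fin N) (x : Fin N → ℝ) : ℂ :=
  -(1 / (4 * (Real.pi : ℂ) * Complex.I)) * (Sp (ξ j x) (τ x) / Sp (ξ i x) (τ x))
    * Spp (ξ i x - ξ j x) (τ x) * pdC j τ x

/-!
Theta functions solve the heat equation `4πi ∂_τ θ = ∂_u² θ`, so the `τ`-derivative of
`S' = ∂_u log (θ₁/θ₄)` is `1/(4πi)` times the `u`-derivative of `F = θ₁''/θ₁ - θ₄''/θ₄`. The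
bilinear formula `θ₁(p, τ/2) θ₂(q, τ/2) = θ₁(p+q) θ₄(p-q) + θ₄(p+q) θ₁(p-q)` expresses `S'` and `F`
through theta functions of parameter `τ/2`, and a three-term relation between these becomes the
addition theorem `S'(x) S'(y) = S'(x+y) (ζ₁(x, τ/2) + ζ₁(y, τ/2)) - F(x+y)`.

Along the Gibbons–Tsarev flow the `λ_k`-derivatives of `S'(ξ_j, τ)` and `S''(ξ_i - ξ_j, τ)` are
exactly the combinations of `S''`, `S'''`, `ζ₁` and `F` that occur in the derivatives of the
addition theorem in `y` and in `x, y`. They thus become products of values of `S'` and `S''` plus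
multiples of `℘₁`, and the `℘₁` terms cancel in the derivative of `Γ_{ij}`.
-/

open ContinuousLinearMap (fst snd)
open scoped Real Topology

/-- The constant `1 / (4πi)` of the heat equation for theta functions. -/
local notation "κ" => (1 / (4 * (Real.pi : ℂ) * Complex.I))

lemma hasDerivAt_left_of_hasFDerivAt {f : ℂ → ℂ → ℂ} {a b u τ : ℂ}
    (h : HasFDerivAt (fun p : ℂ × ℂ ↦ f p.1 p.2) (a • fst ℂ ℂ ℂ + b • snd ℂ ℂ ℂ) (u, τ)) :
    HasDerivAt (f · τ) a u := by
  simpa using! h.comp_hasDerivAt u ((hasDerivAt_id u).prodMk (hasDerivAt_const u τ))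

/-! ### Theta series with periodic weights -/

section ThetaSeries

variable {N : ℕ}

/-- The summand of `thetaSeries`. The frequency `m` stands for twice the summation variable of the
classical series, so that integral and half-integral characteristics are treated alike. -/
noncomputable def thetaTerm (w : ZMod N → ℂ) (k : ℕ) (m : ℤ) (u τ : ℂ) : ℂ :=
  w m * (π * I * m) ^ k * jacobiTheta₂_term m (u / 2) (τ / 4)

/-- The `k`-th derivative in `u` of the theta series `∑ w(m) exp (πimu + πim²τ/4)`, differentiated
termwise. -/
noncomputable def thetaSeries (w : ZMod N → ℂ) (k : ℕ) (u τ : ℂ) : ℂ :=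
  ∑' m : ℤ, thetaTerm w k m u τ

/-- The derivative of `thetaTerm` in the pair `(u, τ)`; each summand solves the heat equation
`4πi ∂_τ = ∂_u²`. -/
noncomputable def thetaTermFDeriv (w : ZMod N → ℂ) (k : ℕ) (m : ℤ) (u τ : ℂ) : ℂ × ℂ →L[ℂ] ℂ :=
  thetaTerm w (k + 1) m u τ • fst ℂ ℂ ℂ + (κ * thetaTerm w (k + 2) m u τ) • snd ℂ ℂ ℂ

lemma hasFDerivAt_thetaTerm (w : ZMod N → ℂ) (k : ℕ) (m : ℤ) (p : ℂ × ℂ) :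
    HasFDerivAt (fun q : ℂ × ℂ ↦ thetaTerm w k m q.1 q.2) (thetaTermFDeriv w k m p.1 p.2) p := by
  have hscale : HasFDerivAt (fun q : ℂ × ℂ ↦ (q.1 / 2, q.2 / 4))
      (((2 : ℂ)⁻¹ • fst ℂ ℂ ℂ).prod ((4 : ℂ)⁻¹ • snd ℂ ℂ ℂ)) p := by
    simp only [div_eq_inv_mul]
    exact (hasFDerivAt_fst.const_mul _).prodMk (hasFDerivAt_snd.const_mul _)
  have hcomp := ((hasFDerivAt_jacobiTheta₂_term m (p.1 / 2) (p.2 / 4)).comp p hscale).const_mul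
    (w m * (π * I * m) ^ k)
  refine hcomp.congr_fderiv ?_
  simp only [jacobiTheta₂_term_fderiv, ContinuousLinearMap.add_comp, ContinuousLinearMap.smul_comp,
    ContinuousLinearMap.fst_comp_prod, ContinuousLinearMap.snd_comp_prod, thetaTermFDeriv,
    thetaTerm, jacobiTheta₂_term]
  match_scalars
  · ring
  · field_simp
    ring

lemma norm_thetaTermFDeriv_le (w : ZMod N → ℂ) (k : ℕ) (m : ℤ) (u τ : ℂ) :
    ‖thetaTermFDeriv w k m u τ‖ ≤
      ‖thetaTerm w (k + 1) m u τ‖ + ‖κ‖ * ‖thetaTerm w (k + 2) m u τ‖ := by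
  refine (norm_add_le _ _).trans (add_le_add ?_ ?_)
  · rw [norm_smul]
    exact mul_le_of_le_one_right (norm_nonneg _) (ContinuousLinearMap.norm_fst_le ..)
  · rw [norm_smul, norm_mul]
    exact mul_le_of_le_one_right (by positivity) (ContinuousLinearMap.norm_snd_le ..)

lemma tsum_thetaTerm_odd {w : ZMod N → ℂ} (hw : ∀ m : ℤ, w (2 * m : ℤ) = 0) (k : ℕ) (u τ : ℂ) :
    ∑' m, thetaTerm w k (2 * m + 1) u τ = thetaSeries w k u τ := by
  refine ((add_left_injective 1).comp (mul_right_injective₀ (two_ne_zero' ℤ))).tsum_eq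
    (f := fun m ↦ thetaTerm w k m u τ) fun n hn ↦ ?_
  obtain ⟨m, rfl | rfl⟩ := n.even_or_odd'
  · exact absurd (by simp only [thetaTerm, hw, zero_mul]) hn
  · exact ⟨m, rfl⟩

lemma tsum_thetaTerm_even {w : ZMod N → ℂ} (hw : ∀ m : ℤ, w (2 * m + 1 : ℤ) = 0) (k : ℕ)
    (u τ : ℂ) : ∑' m, thetaTerm w k (2 * m) u τ = thetaSeries w k u τ := by
  refine (mul_right_injective₀ (two_ne_zero' ℤ)).tsum_eq
    (f := fun m ↦ thetaTerm w k m u τ) fun n hn ↦ ?_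
  obtain ⟨m, rfl | rfl⟩ := n.even_or_odd'
  · exact ⟨m, rfl⟩
  · exact absurd (by simp only [thetaTerm, hw, zero_mul]) hn

lemma thetaSeries_neg {w : ZMod N → ℂ} {ε : ℂ} (hw : ∀ z, w (-z) = ε * w z) (k : ℕ) (u τ : ℂ) :
    thetaSeries w k (-u) τ = (-1) ^ k * ε * thetaSeries w k u τ := by
  rw [thetaSeries, thetaSeries, ← tsum_mul_left, ← (Equiv.neg ℤ).tsum_eq]
  refine tsum_congr fun m ↦ ?_
  have hpow : (π * I * (-m : ℤ) : ℂ) ^ k = (-1) ^ k * (π * I * m) ^ k := by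
    rw [← mul_pow]
    push_cast
    ring
  have hexp : jacobiTheta₂_term (-m) (-u / 2) (τ / 4) = jacobiTheta₂_term m (u / 2) (τ / 4) := by
    simp only [jacobiTheta₂_term]
    push_cast
    ring_nf
  rw [Equiv.neg_apply, thetaTerm, thetaTerm, hpow, hexp, Int.cast_neg, hw]
  ring

variable [NeZero N]

lemma norm_thetaTerm_le (w : ZMod N → ℂ) (k : ℕ) {S T : ℝ} (hT : 0 < T) {u τ : ℂ}
    (hu : |u.im| / 2 ≤ S) (hτ : T ≤ τ.im / 4) (m : ℤ) :
    ‖thetaTerm w k m u τ‖ ≤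
      ‖w‖ * π ^ k * (|m| ^ k * Real.exp (-π * (T * m ^ 2 - 2 * S * |m|))) := by
  have hexp : ‖jacobiTheta₂_term m (u / 2) (τ / 4)‖ ≤
      Real.exp (-π * (T * m ^ 2 - 2 * S * |m|)) :=
    norm_jacobiTheta₂_term_le hT (by simpa [abs_div] using hu) (by simpa using hτ) m
  calc ‖thetaTerm w k m u τ‖
      = ‖w m‖ * (π ^ k * |m| ^ k) * ‖jacobiTheta₂_term m (u / 2) (τ / 4)‖ := by
        simp [thetaTerm, mul_pow, abs_of_pos Real.pi_pos]
    _ ≤ ‖w‖ * (π ^ k * |m| ^ k) * Real.exp (-π * (T * m ^ 2 - 2 * S * |m|)) := by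
        gcongr
        exact norm_le_pi_norm w m
    _ = _ := by ring

lemma summable_norm_thetaTerm (w : ZMod N → ℂ) (k : ℕ) (u : ℂ) {τ : ℂ} (hτ : 0 < τ.im) :
    Summable fun m ↦ ‖thetaTerm w k m u τ‖ :=
  have hτ' : 0 < τ.im / 4 := by positivity
  .of_nonneg_of_le (fun _ ↦ norm_nonneg _) (norm_thetaTerm_le w k hτ' le_rfl le_rfl)
    ((summable_pow_mul_jacobiTheta₂_term_bound _ hτ' k).mul_left _)

lemma tsum_thetaTermFDeriv (w : ZMod N → ℂ) (k : ℕ) (u : ℂ) {τ : ℂ} (hτ : 0 < τ.im) :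
    ∑' m, thetaTermFDeriv w k m u τ =
      thetaSeries w (k + 1) u τ • fst ℂ ℂ ℂ + (κ * thetaSeries w (k + 2) u τ) • snd ℂ ℂ ℂ := by
  have hu := (summable_norm_thetaTerm w (k + 1) u hτ).of_norm
  have hτ' := (summable_norm_thetaTerm w (k + 2) u hτ).of_norm.mul_left κ
  simp only [thetaTermFDeriv]
  rw [(hu.smul_const _).tsum_add (hτ'.smul_const _), hu.tsum_smul_const, hτ'.tsum_smul_const,
    tsum_mul_left]
  rfl

theorem hasFDerivAt_thetaSeries (w : ZMod N → ℂ) (k : ℕ) (u : ℂ) {τ : ℂ} (hτ : 0 < τ.im) :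
    HasFDerivAt (fun p : ℂ × ℂ ↦ thetaSeries w k p.1 p.2)
      (thetaSeries w (k + 1) u τ • fst ℂ ℂ ℂ + (κ * thetaSeries w (k + 2) u τ) • snd ℂ ℂ ℂ)
      (u, τ) := by
  obtain ⟨T, hT, hTτ⟩ := exists_between (show 0 < τ.im / 4 by positivity)
  obtain ⟨S, hS⟩ := exists_gt (|u.im| / 2)
  have hV_open : IsOpen ({v : ℂ | |v.im| / 2 < S} ×ˢ {σ : ℂ | T < σ.im / 4}) :=
    (isOpen_lt (by fun_prop) continuous_const).prod (isOpen_lt continuous_const (by fun_prop))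
  have hV_conn : IsPreconnected ({v : ℂ | |v.im| / 2 < S} ×ˢ {σ : ℂ | T < σ.im / 4}) := by
    have hstrip : {v : ℂ | |v.im| / 2 < S} = {v | -(S * 2) < v.im} ∩ {v | v.im < S * 2} := by
      ext v; simp [div_lt_iff₀, abs_lt]
    have hhalf : {σ : ℂ | T < σ.im / 4} = {σ | T * 4 < σ.im} := by
      ext σ; simp [lt_div_iff₀]
    rw [hstrip, hhalf]
    exact ((convex_halfSpace_im_gt _).inter (convex_halfSpace_im_lt _)).isPreconnected.prod
      (convex_halfSpace_im_gt _).isPreconnected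
  have hbound (m : ℤ) (p : ℂ × ℂ) (hp : p ∈ {v : ℂ | |v.im| / 2 < S} ×ˢ {σ : ℂ | T < σ.im / 4}) :
      ‖thetaTermFDeriv w k m p.1 p.2‖ ≤
        ‖w‖ * π ^ (k + 1) * (|m| ^ (k + 1) * Real.exp (-π * (T * m ^ 2 - 2 * S * |m|))) +
        ‖κ‖ * (‖w‖ * π ^ (k + 2) *
          (|m| ^ (k + 2) * Real.exp (-π * (T * m ^ 2 - 2 * S * |m|)))) := by
    refine (norm_thetaTermFDeriv_le ..).trans (add_le_add ?_ (mul_le_mul_of_nonneg_left ?_ ?_))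
    · exact norm_thetaTerm_le _ _ hT hp.1.le hp.2.le _
    · exact norm_thetaTerm_le _ _ hT hp.1.le hp.2.le _
    · exact norm_nonneg _
  have hsummable (l : ℕ) := (summable_pow_mul_jacobiTheta₂_term_bound S hT l).mul_left (‖w‖ * π ^ l)
  have hmem : (u, τ) ∈ {v : ℂ | |v.im| / 2 < S} ×ˢ {σ : ℂ | T < σ.im / 4} := ⟨hS, hTτ⟩
  have hderiv := hasFDerivAt_tsum_of_isPreconnected
    ((hsummable (k + 1)).add ((hsummable (k + 2)).mul_left ‖κ‖)) hV_open hV_conn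
    (fun m p _ ↦ hasFDerivAt_thetaTerm w k m p) hbound hmem
    (summable_norm_thetaTerm w k u hτ).of_norm hmem
  exact tsum_thetaTermFDeriv w k u hτ ▸ hderiv

lemma hasDerivAt_thetaSeries (w : ZMod N → ℂ) (k : ℕ) (u : ℂ) {τ : ℂ} (hτ : 0 < τ.im) :
    HasDerivAt (thetaSeries w k · τ) (thetaSeries w (k + 1) u τ) u :=
  hasDerivAt_left_of_hasFDerivAt (hasFDerivAt_thetaSeries w k u hτ)

lemma thetaSeries_mul_thetaSeries_half {a b : ZMod N → ℂ}
    (hab : ∀ m n : ℤ, Odd (m + n) → a m * b n = 0) (p q : ℂ) {τ : ℂ} (hτ : 0 < τ.im) :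
    thetaSeries a 0 p (τ / 2) * thetaSeries b 0 q (τ / 2) =
      ∑' P : ℤ × ℤ, a (P.1 + P.2 : ℤ) * b (P.1 - P.2 : ℤ) *
        (jacobiTheta₂_term P.1 ((p + q) / 2) (τ / 4) *
          jacobiTheta₂_term P.2 ((p - q) / 2) (τ / 4)) := by
  have hτ' : 0 < (τ / 2).im := by simpa using hτ
  -- The change of frequencies `(m, n) ↦ (m + n, m - n)` reaches exactly the pairs of equal parity.
  have hinj : Function.Injective fun P : ℤ × ℤ ↦ (P.1 + P.2, P.1 - P.2) := by
    rintro ⟨m, n⟩ ⟨m', n'⟩ h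
    simp only [Prod.mk.injEq] at h ⊢
    omega
  simp only [thetaSeries]
  rw [tsum_mul_tsum_of_summable_norm (summable_norm_thetaTerm a 0 p hτ')
    (summable_norm_thetaTerm b 0 q hτ'), ← hinj.tsum_eq]
  · refine tsum_congr fun P ↦ ?_
    simp only [thetaTerm, jacobiTheta₂_term, pow_zero, mul_one]
    rw [mul_mul_mul_comm, ← Complex.exp_add, ← Complex.exp_add]
    congr 2
    push_cast
    ring
  · rintro ⟨m, n⟩ hmn
    obtain ⟨P, hP⟩ : Even (m + n) := by
      by_contra hodd
      refine hmn ?_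
      simp only [thetaTerm, pow_zero, mul_one]
      rw [mul_mul_mul_comm, hab m n (Int.not_even_iff_odd.mp hodd), zero_mul]
    exact ⟨(P, m - P), Prod.ext (by simp) (by simp only; omega)⟩

/-- The ratio `∂ᵤᵏϑ / ϑ` of a theta series `ϑ`, in terms of which all derivatives of `log ϑ` are
polynomials. -/
noncomputable def thetaMoment (w : ZMod N → ℂ) (k : ℕ) (u τ : ℂ) : ℂ :=
  thetaSeries w k u τ / thetaSeries w 0 u τ

lemma hasFDerivAt_thetaMoment (w : ZMod N → ℂ) (k : ℕ) {u τ : ℂ} (hτ : 0 < τ.im)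
    (h0 : thetaSeries w 0 u τ ≠ 0) :
    HasFDerivAt (fun p : ℂ × ℂ ↦ thetaMoment w k p.1 p.2)
      ((thetaMoment w (k + 1) u τ - thetaMoment w k u τ * thetaMoment w 1 u τ) • fst ℂ ℂ ℂ +
        (κ * (thetaMoment w (k + 2) u τ - thetaMoment w k u τ * thetaMoment w 2 u τ)) • snd ℂ ℂ ℂ)
      (u, τ) := by
  have hinv := (hasDerivAt_inv h0).comp_hasFDerivAt (u, τ) (hasFDerivAt_thetaSeries w 0 u hτ)
  refine ((hasFDerivAt_thetaSeries w k u hτ).mul hinv).congr_fderiv ?_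
  simp only [thetaMoment, Function.comp_apply]
  match_scalars <;> field_simp <;> ring

lemma hasDerivAt_thetaMoment (w : ZMod N → ℂ) (k : ℕ) {u τ : ℂ} (hτ : 0 < τ.im)
    (h0 : thetaSeries w 0 u τ ≠ 0) :
    HasDerivAt (thetaMoment w k · τ)
      (thetaMoment w (k + 1) u τ - thetaMoment w k u τ * thetaMoment w 1 u τ) u :=
  hasDerivAt_left_of_hasFDerivAt (hasFDerivAt_thetaMoment w k hτ h0)

lemma hasFDerivAt_thetaMoment_one (w : ZMod N → ℂ) {u τ : ℂ} (hτ : 0 < τ.im)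
    (h0 : thetaSeries w 0 u τ ≠ 0) :
    HasFDerivAt (fun p : ℂ × ℂ ↦ thetaMoment w 1 p.1 p.2)
      (deriv (thetaMoment w 1 · τ) u • fst ℂ ℂ ℂ +
        (κ * deriv (thetaMoment w 2 · τ) u) • snd ℂ ℂ ℂ) (u, τ) := by
  rw [(hasDerivAt_thetaMoment w 1 hτ h0).deriv, (hasDerivAt_thetaMoment w 2 hτ h0).deriv,
    mul_comm (thetaMoment w 2 u τ)]
  exact hasFDerivAt_thetaMoment w 1 hτ h0

lemma eventually_thetaSeries_ne_zero {w : ZMod N → ℂ} {u τ : ℂ} (hτ : 0 < τ.im)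
    (h0 : thetaSeries w 0 u τ ≠ 0) :
    ∀ᶠ p : ℂ × ℂ in 𝓝 (u, τ), 0 < p.2.im ∧ thetaSeries w 0 p.1 p.2 ≠ 0 :=
  ((Complex.continuous_im.comp continuous_snd).continuousAt.eventually (lt_mem_nhds hτ)).and
    ((hasFDerivAt_thetaSeries w 0 u hτ).continuousAt.eventually_ne h0)

lemma hasDerivAt_deriv_thetaMoment (w : ZMod N → ℂ) (k : ℕ) {u τ : ℂ} (hτ : 0 < τ.im)
    (h0 : thetaSeries w 0 u τ ≠ 0) :
    HasDerivAt (deriv (thetaMoment w k · τ))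
      (thetaMoment w (k + 2) u τ - 2 * thetaMoment w (k + 1) u τ * thetaMoment w 1 u τ -
        thetaMoment w k u τ * (thetaMoment w 2 u τ - 2 * thetaMoment w 1 u τ ^ 2)) u := by
  have hderiv : deriv (thetaMoment w k · τ) =ᶠ[𝓝 u] fun v ↦
      thetaMoment w (k + 1) v τ - thetaMoment w k v τ * thetaMoment w 1 v τ :=
    ((hasDerivAt_thetaSeries w 0 u hτ).continuousAt.eventually_ne h0).mono fun v hv ↦
      (hasDerivAt_thetaMoment w k hτ hv).deriv
  refine HasDerivAt.congr_of_eventuallyEq ?_ hderiv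
  convert (hasDerivAt_thetaMoment w (k + 1) hτ h0).fun_sub
    ((hasDerivAt_thetaMoment w k hτ h0).fun_mul (hasDerivAt_thetaMoment w 1 hτ h0)) using 1
  ring

lemma hasFDerivAt_deriv_thetaMoment_one (w : ZMod N → ℂ) {u τ : ℂ} (hτ : 0 < τ.im)
    (h0 : thetaSeries w 0 u τ ≠ 0) :
    HasFDerivAt (fun p : ℂ × ℂ ↦ deriv (thetaMoment w 1 · p.2) p.1)
      (deriv (deriv (thetaMoment w 1 · τ)) u • fst ℂ ℂ ℂ +
        (κ * deriv (deriv (thetaMoment w 2 · τ)) u) • snd ℂ ℂ ℂ) (u, τ) := by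
  have hderiv : (fun p : ℂ × ℂ ↦ deriv (thetaMoment w 1 · p.2) p.1) =ᶠ[𝓝 (u, τ)] fun p ↦
      thetaMoment w 2 p.1 p.2 - thetaMoment w 1 p.1 p.2 * thetaMoment w 1 p.1 p.2 :=
    (eventually_thetaSeries_ne_zero hτ h0).mono fun p hp ↦
      (hasDerivAt_thetaMoment w 1 hp.1 hp.2).deriv
  have h₁ := hasFDerivAt_thetaMoment w 1 hτ h0
  refine (((hasFDerivAt_thetaMoment w 2 hτ h0).fun_sub
    (h₁.mul h₁)).congr_of_eventuallyEq hderiv).congr_fderiv ?_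
  rw [(hasDerivAt_deriv_thetaMoment w 1 hτ h0).deriv,
    (hasDerivAt_deriv_thetaMoment w 2 hτ h0).deriv]
  module

end ThetaSeries

/-! ### The theta functions `θ₁`, `θ₂`, `θ₄` -/

/-- The weights presenting `theta1` as a `thetaSeries`. -/
noncomputable def theta1Weight (m : ZMod 4) : ℂ := -I * (ZMod.χ₄ m : ℤ)

/-- The weights presenting `theta2` as a `thetaSeries`. -/
noncomputable def theta2Weight (m : ZMod 4) : ℂ := ((ZMod.χ₄ m) ^ 2 : ℤ)

/-- The weights presenting `theta4` as a `thetaSeries`. -/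
noncomputable def theta4Weight (m : ZMod 4) : ℂ := (ZMod.χ₄ (m + 1) : ℤ)

/-- `ϑ₁ k u τ` is the `k`-th derivative of `theta1` in `u`. -/
local notation "ϑ₁" => thetaSeries theta1Weight
/-- `ϑ₂ k u τ` is the `k`-th derivative of `theta2` in `u`. -/
local notation "ϑ₂" => thetaSeries theta2Weight
/-- `ϑ₄ k u τ` is the `k`-th derivative of `theta4` in `u`. -/
local notation "ϑ₄" => thetaSeries theta4Weight

lemma exp_pi_mul_I_mul_int (k : ℤ) : cexp (π * I * k) = (ZMod.χ₄ (2 * k + 1) : ℤ) := by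
  have hχ : ∀ z : ZMod 4, ZMod.χ₄ (2 * (z + z) + 1) = 1 ∧ ZMod.χ₄ (2 * (2 * z + 1) + 1) = -1 := by
    decide
  rw [mul_comm, exp_int_mul, exp_pi_mul_I]
  obtain ⟨n, rfl⟩ | ⟨n, rfl⟩ := k.even_or_odd
  · simp [(hχ n).1, (Even.add_self n).neg_one_zpow]
  · simp [(hχ n).2, (odd_two_mul_add_one n).neg_one_zpow]

lemma theta1_eq_thetaSeries (u τ : ℂ) : theta1 u τ = ϑ₁ 0 u τ := by
  have heven : ∀ z : ZMod 4, ZMod.χ₄ (2 * z) = 0 := by decide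
  rw [theta1, ← tsum_neg, ← tsum_thetaTerm_odd (by simp [theta1Weight, heven])]
  refine tsum_congr fun m ↦ ?_
  have hexp : cexp (π * I * τ * (m + 1 / 2) ^ 2 + 2 * π * I * (u + 1 / 2) * (m + 1 / 2)) =
      cexp (π / 2 * I) * cexp (π * I * m) *
        cexp (π * I * τ * (m + 1 / 2) ^ 2 + 2 * π * I * u * (m + 1 / 2)) := by
    rw [← Complex.exp_add, ← Complex.exp_add]
    ring_nf
  rw [hexp, exp_pi_mul_I_mul_int, exp_pi_div_two_mul_I, thetaTerm, theta1Weight, jacobiTheta₂_term]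
  push_cast
  ring_nf

lemma theta4_eq_thetaSeries (u τ : ℂ) : theta4 u τ = ϑ₄ 0 u τ := by
  have hodd : ∀ z : ZMod 4, ZMod.χ₄ (2 * z + 1 + 1) = 0 := by decide
  rw [theta4, ← tsum_thetaTerm_even (by simp [theta4Weight, hodd])]
  refine tsum_congr fun m ↦ ?_
  have hexp : cexp (π * I * τ * m ^ 2 + 2 * π * I * (u + 1 / 2) * m) =
      cexp (π * I * m) * cexp (π * I * τ * m ^ 2 + 2 * π * I * u * m) := by
    rw [← Complex.exp_add]
    ring_nf
  rw [hexp, exp_pi_mul_I_mul_int, thetaTerm, theta4Weight, jacobiTheta₂_term]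
  push_cast
  ring_nf

lemma vartheta₁_neg (k : ℕ) (u τ : ℂ) :
    ϑ₁ k (-u) τ = -(-1) ^ k * ϑ₁ k u τ := by
  have hneg : ∀ z : ZMod 4, ZMod.χ₄ (-z) = -ZMod.χ₄ z := by decide
  rw [thetaSeries_neg (ε := -1) (fun z ↦ by simp [theta1Weight, hneg]), mul_neg_one]

lemma vartheta₄_neg (k : ℕ) (u τ : ℂ) :
    ϑ₄ k (-u) τ = (-1) ^ k * ϑ₄ k u τ := by
  have hneg : ∀ z : ZMod 4, ZMod.χ₄ (-z + 1) = ZMod.χ₄ (z + 1) := by decide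
  rw [thetaSeries_neg (ε := 1) (fun z ↦ by simp [theta4Weight, hneg]), mul_one]

lemma theta1Weight_add_mul_theta2Weight_sub (p q : ZMod 4) :
    theta1Weight (p + q) * theta2Weight (p - q) =
      theta1Weight p * theta4Weight q + theta4Weight p * theta1Weight q := by
  have hχ : ∀ p q : ZMod 4, ZMod.χ₄ (p + q) * ZMod.χ₄ (p - q) ^ 2 =
      ZMod.χ₄ p * ZMod.χ₄ (q + 1) + ZMod.χ₄ (p + 1) * ZMod.χ₄ q := by decide
  have hχ' := congrArg (Int.cast : ℤ → ℂ) (hχ p q)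
  simp only [theta1Weight, theta2Weight, theta4Weight]
  push_cast at hχ' ⊢
  linear_combination -I * hχ'

/-! ### The bilinear addition formula -/

theorem vartheta₁_mul_vartheta₂_half (p q : ℂ) {τ : ℂ} (hτ : 0 < τ.im) :
    ϑ₁ 0 p (τ / 2) * ϑ₂ 0 q (τ / 2) =
      ϑ₁ 0 (p + q) τ * ϑ₄ 0 (p - q) τ + ϑ₄ 0 (p + q) τ * ϑ₁ 0 (p - q) τ := by
  have hparity : ∀ m n : ℤ, Odd (m + n) → theta1Weight m * theta2Weight n = 0 := by
    rintro m n ⟨k, hk⟩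
    have hχ : ∀ m k : ZMod 4, ZMod.χ₄ m * ZMod.χ₄ (2 * k + 1 - m) ^ 2 = 0 := by decide
    have hn : n = 2 * k + 1 - m := by omega
    have hχ' := congrArg (Int.cast : ℤ → ℂ) (hχ m k)
    simp only [theta1Weight, theta2Weight, hn]
    push_cast at hχ' ⊢
    linear_combination -I * hχ'
  have hs₁ (k : ℕ) (u : ℂ) := summable_norm_thetaTerm theta1Weight k u hτ
  have hs₄ (k : ℕ) (u : ℂ) := summable_norm_thetaTerm theta4Weight k u hτ
  rw [thetaSeries_mul_thetaSeries_half hparity p q hτ]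
  simp only [thetaSeries]
  rw [tsum_mul_tsum_of_summable_norm (hs₁ 0 (p + q)) (hs₄ 0 (p - q)),
    tsum_mul_tsum_of_summable_norm (hs₄ 0 (p + q)) (hs₁ 0 (p - q)),
    ← (summable_mul_of_summable_norm (hs₁ 0 (p + q)) (hs₄ 0 (p - q))).tsum_add
      (summable_mul_of_summable_norm (hs₄ 0 (p + q)) (hs₁ 0 (p - q)))]
  refine tsum_congr fun P ↦ ?_
  simp only [thetaTerm, pow_zero, mul_one]
  push_cast
  rw [theta1Weight_add_mul_theta2Weight_sub]
  ring

lemma deriv_vartheta₁_mul_vartheta₂_half (p q : ℂ) {τ : ℂ} (hτ : 0 < τ.im) :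
    ϑ₁ 1 p (τ / 2) * ϑ₂ 0 q (τ / 2) =
      ϑ₁ 1 (p + q) τ * ϑ₄ 0 (p - q) τ + ϑ₁ 0 (p + q) τ * ϑ₄ 1 (p - q) τ +
        (ϑ₄ 1 (p + q) τ * ϑ₁ 0 (p - q) τ + ϑ₄ 0 (p + q) τ * ϑ₁ 1 (p - q) τ) := by
  have hτ' : 0 < (τ / 2).im := by simpa using hτ
  have hadd (w : ZMod 4 → ℂ) := (hasDerivAt_thetaSeries w 0 (p + q) hτ).comp_add_const p q
  have hsub (w : ZMod 4 → ℂ) := (hasDerivAt_thetaSeries w 0 (p - q) hτ).comp_sub_const p q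
  refine ((hasDerivAt_thetaSeries _ 0 p hτ').mul_const (ϑ₂ 0 q (τ / 2))).unique ?_
  simp only [fun p ↦ vartheta₁_mul_vartheta₂_half p q hτ]
  exact ((hadd _).fun_mul (hsub _)).fun_add ((hadd _).fun_mul (hsub _))

lemma vartheta₁_mul_deriv_vartheta₂_half (p q : ℂ) {τ : ℂ} (hτ : 0 < τ.im) :
    ϑ₁ 0 p (τ / 2) * ϑ₂ 1 q (τ / 2) =
      ϑ₁ 1 (p + q) τ * ϑ₄ 0 (p - q) τ - ϑ₁ 0 (p + q) τ * ϑ₄ 1 (p - q) τ +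
        (ϑ₄ 1 (p + q) τ * ϑ₁ 0 (p - q) τ - ϑ₄ 0 (p + q) τ * ϑ₁ 1 (p - q) τ) := by
  have hτ' : 0 < (τ / 2).im := by simpa using hτ
  have hadd (w : ZMod 4 → ℂ) := (hasDerivAt_thetaSeries w 0 (p + q) hτ).comp_const_add p q
  have hsub (w : ZMod 4 → ℂ) := (hasDerivAt_thetaSeries w 0 (p - q) hτ).comp_const_sub p q
  refine ((hasDerivAt_thetaSeries _ 0 q hτ').const_mul (ϑ₁ 0 p (τ / 2))).unique ?_
  simp only [fun q ↦ vartheta₁_mul_vartheta₂_half p q hτ]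
  convert ((hadd _).fun_mul (hsub _)).fun_add ((hadd _).fun_mul (hsub _)) using 1
  ring

lemma vartheta₁_mul_vartheta₂_zero_half (u : ℂ) {τ : ℂ} (hτ : 0 < τ.im) :
    ϑ₁ 0 u (τ / 2) * ϑ₂ 0 0 (τ / 2) = 2 * (ϑ₁ 0 u τ * ϑ₄ 0 u τ) := by
  rw [vartheta₁_mul_vartheta₂_half u 0 hτ, add_zero, sub_zero]
  ring

lemma deriv_vartheta₁_mul_vartheta₂_zero_half (u : ℂ) {τ : ℂ} (hτ : 0 < τ.im) :
    ϑ₁ 1 u (τ / 2) * ϑ₂ 0 0 (τ / 2) = 2 * (ϑ₁ 1 u τ * ϑ₄ 0 u τ + ϑ₁ 0 u τ * ϑ₄ 1 u τ) := by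
  rw [deriv_vartheta₁_mul_vartheta₂_half u 0 hτ, add_zero, sub_zero]
  ring

lemma deriv_vartheta₁_zero_mul_vartheta₂_half (u : ℂ) {τ : ℂ} (hτ : 0 < τ.im) :
    ϑ₁ 1 0 (τ / 2) * ϑ₂ 0 u (τ / 2) = 2 * (ϑ₁ 1 u τ * ϑ₄ 0 u τ - ϑ₁ 0 u τ * ϑ₄ 1 u τ) := by
  rw [deriv_vartheta₁_mul_vartheta₂_half 0 u hτ, zero_add, zero_sub]
  simp only [vartheta₁_neg, vartheta₄_neg]
  ring

theorem vartheta_three_term (x y : ℂ) {τ : ℂ} (hτ : 0 < τ.im) :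
    ϑ₂ 0 0 (τ / 2) *
        (ϑ₂ 0 (x + y) (τ / 2) *
            (ϑ₁ 1 x (τ / 2) * ϑ₁ 0 y (τ / 2) + ϑ₁ 0 x (τ / 2) * ϑ₁ 1 y (τ / 2)) -
          ϑ₁ 0 x (τ / 2) * ϑ₁ 0 y (τ / 2) * ϑ₂ 1 (x + y) (τ / 2)) =
      ϑ₁ 1 0 (τ / 2) * ϑ₂ 0 x (τ / 2) * ϑ₂ 0 y (τ / 2) * ϑ₁ 0 (x + y) (τ / 2) := by
  have hx := vartheta₁_mul_vartheta₂_half x (x + y) hτ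
  have hx₁ := deriv_vartheta₁_mul_vartheta₂_half x (x + y) hτ
  have hx₂ := vartheta₁_mul_deriv_vartheta₂_half x (x + y) hτ
  have hxy := vartheta₁_mul_vartheta₂_half (x + y) x hτ
  have hy := vartheta₁_mul_vartheta₂_zero_half y hτ
  have hy₁ := deriv_vartheta₁_mul_vartheta₂_zero_half y hτ
  have hy₂ := deriv_vartheta₁_zero_mul_vartheta₂_half y hτ
  simp only [sub_add_cancel_left, add_sub_cancel_left, add_comm (x + y) x, vartheta₁_neg,
    vartheta₄_neg] at hx hx₁ hx₂ hxy
  -- Both sides are now values at `2x + y` times values at `y`, all for the parameter `τ`.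
  linear_combination
    ϑ₂ 0 0 (τ / 2) * (ϑ₁ 0 y (τ / 2) * (hx₁ - hx₂) + ϑ₁ 1 y (τ / 2) * hx) -
      ϑ₁ 1 0 (τ / 2) * ϑ₂ 0 y (τ / 2) * hxy +
    2 * (ϑ₄ 0 (x + (x + y)) τ * ϑ₁ 1 y τ - ϑ₁ 0 (x + (x + y)) τ * ϑ₄ 1 y τ) * hy +
    (ϑ₁ 0 (x + (x + y)) τ * ϑ₄ 0 y τ - ϑ₄ 0 (x + (x + y)) τ * ϑ₁ 0 y τ) * hy₁ -
    (ϑ₁ 0 (x + (x + y)) τ * ϑ₄ 0 y τ + ϑ₄ 0 (x + (x + y)) τ * ϑ₁ 0 y τ) * hy₂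

/-! ### The functions `S'` and `S''` -/

lemma zeta1_eq_thetaMoment (u : ℂ) {τ : ℂ} (hτ : 0 < τ.im) :
    zeta1 u τ = thetaMoment theta1Weight 1 u τ := by
  simp only [zeta1, theta1_eq_thetaSeries, (hasDerivAt_thetaSeries _ 0 u hτ).deriv, thetaMoment]

lemma zeta4_eq_thetaMoment (u : ℂ) {τ : ℂ} (hτ : 0 < τ.im) :
    zeta4 u τ = thetaMoment theta4Weight 1 u τ := by
  simp only [zeta4, theta4_eq_thetaSeries, (hasDerivAt_thetaSeries _ 0 u hτ).deriv, thetaMoment]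

lemma zeta1_neg (u : ℂ) {τ : ℂ} (hτ : 0 < τ.im) : zeta1 (-u) τ = -zeta1 u τ := by
  simp only [zeta1_eq_thetaMoment _ hτ, thetaMoment, vartheta₁_neg]
  ring

lemma hasDerivAt_zeta1 {u τ : ℂ} (hτ : 0 < τ.im) (h0 : theta1 u τ ≠ 0) :
    HasDerivAt (zeta1 · τ) (-wp1 u τ) u := by
  rw [theta1_eq_thetaSeries] at h0
  have hdiff : DifferentiableAt ℂ (zeta1 · τ) u := by
    simpa only [zeta1_eq_thetaMoment _ hτ] using
      (hasDerivAt_thetaMoment theta1Weight 1 hτ h0).differentiableAt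
  simpa [wp1] using hdiff.hasDerivAt

lemma wp1_neg (u : ℂ) {τ : ℂ} (hτ : 0 < τ.im) : wp1 (-u) τ = wp1 u τ := by
  have hodd : (fun v ↦ zeta1 v τ) = fun v ↦ -zeta1 (-v) τ := by
    ext v
    rw [zeta1_neg v hτ, neg_neg]
  have hderiv : deriv (fun v ↦ zeta1 v τ) u = deriv (fun v ↦ zeta1 v τ) (-u) := by
    conv_lhs => rw [hodd]
    simp [deriv_comp_neg (fun v ↦ zeta1 v τ)]
  rw [wp1, wp1, hderiv]

/-- The points `(u, τ)` of `ℂ × ℍ` at which neither `θ₁` nor `θ₄` vanishes, so that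
`S = log (θ₁/θ₄)` is locally holomorphic. -/
structure IsThetaRegular (u τ : ℂ) : Prop where
  im_pos : 0 < τ.im
  theta1_ne_zero : theta1 u τ ≠ 0
  theta4_ne_zero : theta4 u τ ≠ 0

/-- The derivative `4πi ∂S/∂τ` of `S = log (θ₁/θ₄)`, rewritten with the heat equation as
`θ₁''/θ₁ - θ₄''/θ₄`. -/
noncomputable def heatFlux (u τ : ℂ) : ℂ :=
  thetaMoment theta1Weight 2 u τ - thetaMoment theta4Weight 2 u τ

lemma Sp_eq_thetaMoment (u : ℂ) {τ : ℂ} (hτ : 0 < τ.im) :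
    Sp u τ = thetaMoment theta1Weight 1 u τ - thetaMoment theta4Weight 1 u τ := by
  rw [Sp, zeta1_eq_thetaMoment u hτ, zeta4_eq_thetaMoment u hτ]

namespace IsThetaRegular

variable {u τ : ℂ}

lemma vartheta₁_ne_zero (h : IsThetaRegular u τ) : ϑ₁ 0 u τ ≠ 0 :=
  theta1_eq_thetaSeries u τ ▸ h.theta1_ne_zero

lemma vartheta₄_ne_zero (h : IsThetaRegular u τ) : ϑ₄ 0 u τ ≠ 0 :=
  theta4_eq_thetaSeries u τ ▸ h.theta4_ne_zero

lemma eventually_nhds_prod (h : IsThetaRegular u τ) :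
    ∀ᶠ p : ℂ × ℂ in 𝓝 (u, τ), IsThetaRegular p.1 p.2 := by
  filter_upwards [eventually_thetaSeries_ne_zero h.im_pos h.vartheta₁_ne_zero,
    eventually_thetaSeries_ne_zero h.im_pos h.vartheta₄_ne_zero] with p h₁ h₄
  exact ⟨h₁.1, by rw [theta1_eq_thetaSeries]; exact h₁.2, by rw [theta4_eq_thetaSeries]; exact h₄.2⟩

lemma eventually_nhds (h : IsThetaRegular u τ) : ∀ᶠ v in 𝓝 u, IsThetaRegular v τ :=
  (Continuous.prodMk_left τ).continuousAt.eventually h.eventually_nhds_prod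

lemma Spp_eq_deriv_thetaMoment (h : IsThetaRegular u τ) :
    Spp u τ =
      deriv (thetaMoment theta1Weight 1 · τ) u - deriv (thetaMoment theta4Weight 1 · τ) u := by
  simp only [Spp, Sp_eq_thetaMoment _ h.im_pos]
  exact deriv_fun_sub (hasDerivAt_thetaMoment _ 1 h.im_pos h.vartheta₁_ne_zero).differentiableAt
    (hasDerivAt_thetaMoment _ 1 h.im_pos h.vartheta₄_ne_zero).differentiableAt

lemma hasDerivAt_heatFlux (h : IsThetaRegular u τ) :
    HasDerivAt (heatFlux · τ)
      (deriv (thetaMoment theta1Weight 2 · τ) u - deriv (thetaMoment theta4Weight 2 · τ) u) u :=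
  (hasDerivAt_thetaMoment _ 2 h.im_pos h.vartheta₁_ne_zero).differentiableAt.hasDerivAt.fun_sub
    (hasDerivAt_thetaMoment _ 2 h.im_pos h.vartheta₄_ne_zero).differentiableAt.hasDerivAt

lemma hasDerivAt_deriv_heatFlux (h : IsThetaRegular u τ) :
    HasDerivAt (deriv (heatFlux · τ))
      (deriv (deriv (thetaMoment theta1Weight 2 · τ)) u -
        deriv (deriv (thetaMoment theta4Weight 2 · τ)) u) u :=
  ((hasDerivAt_deriv_thetaMoment _ 2 h.im_pos
    h.vartheta₁_ne_zero).differentiableAt.hasDerivAt.fun_sub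
    (hasDerivAt_deriv_thetaMoment _ 2 h.im_pos
    h.vartheta₄_ne_zero).differentiableAt.hasDerivAt).congr_of_eventuallyEq
    (h.eventually_nhds.mono fun _ hv ↦ hv.hasDerivAt_heatFlux.deriv)

theorem hasFDerivAt_Sp (h : IsThetaRegular u τ) :
    HasFDerivAt (fun p : ℂ × ℂ ↦ Sp p.1 p.2)
      (Spp u τ • fst ℂ ℂ ℂ + (κ * deriv (heatFlux · τ) u) • snd ℂ ℂ ℂ) (u, τ) := by
  refine (((hasFDerivAt_thetaMoment_one _ h.im_pos h.vartheta₁_ne_zero).fun_sub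
    (hasFDerivAt_thetaMoment_one _ h.im_pos h.vartheta₄_ne_zero)).congr_of_eventuallyEq
    (h.eventually_nhds_prod.mono fun p hp ↦ Sp_eq_thetaMoment p.1 hp.im_pos)).congr_fderiv ?_
  rw [h.Spp_eq_deriv_thetaMoment, h.hasDerivAt_heatFlux.deriv]
  module

theorem hasFDerivAt_Spp (h : IsThetaRegular u τ) :
    HasFDerivAt (fun p : ℂ × ℂ ↦ Spp p.1 p.2)
      (Sppp u τ • fst ℂ ℂ ℂ + (κ * deriv (deriv (heatFlux · τ)) u) • snd ℂ ℂ ℂ) (u, τ) := by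
  have hSppp : Sppp u τ = deriv (deriv (thetaMoment theta1Weight 1 · τ)) u -
      deriv (deriv (thetaMoment theta4Weight 1 · τ)) u := by
    have hSpp : (Spp · τ) =ᶠ[𝓝 u] fun v ↦
        deriv (thetaMoment theta1Weight 1 · τ) v - deriv (thetaMoment theta4Weight 1 · τ) v :=
      h.eventually_nhds.mono fun _ hv ↦ hv.Spp_eq_deriv_thetaMoment
    rw [Sppp, hSpp.deriv_eq]
    exact deriv_fun_sub
      (hasDerivAt_deriv_thetaMoment _ 1 h.im_pos h.vartheta₁_ne_zero).differentiableAt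
      (hasDerivAt_deriv_thetaMoment _ 1 h.im_pos h.vartheta₄_ne_zero).differentiableAt
  refine (((hasFDerivAt_deriv_thetaMoment_one _ h.im_pos h.vartheta₁_ne_zero).fun_sub
    (hasFDerivAt_deriv_thetaMoment_one _ h.im_pos h.vartheta₄_ne_zero)).congr_of_eventuallyEq
    (h.eventually_nhds_prod.mono fun p hp ↦ hp.Spp_eq_deriv_thetaMoment)).congr_fderiv ?_
  rw [hSppp, h.hasDerivAt_deriv_heatFlux.deriv]
  module

lemma hasDerivAt_Sp (h : IsThetaRegular u τ) : HasDerivAt (Sp · τ) (Spp u τ) u :=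
  hasDerivAt_left_of_hasFDerivAt h.hasFDerivAt_Sp

lemma hasDerivAt_Spp (h : IsThetaRegular u τ) : HasDerivAt (Spp · τ) (Sppp u τ) u :=
  hasDerivAt_left_of_hasFDerivAt h.hasFDerivAt_Spp

end IsThetaRegular

/-! ### The addition theorem -/

namespace IsThetaRegular

variable {u x y τ : ℂ}

lemma im_half_pos (h : IsThetaRegular u τ) : 0 < (τ / 2).im := by
  simpa using h.im_pos

lemma vartheta₁_half_mul_vartheta₂_half_ne_zero (h : IsThetaRegular u τ) :
    ϑ₁ 0 u (τ / 2) * ϑ₂ 0 0 (τ / 2) ≠ 0 := by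
  rw [vartheta₁_mul_vartheta₂_zero_half u h.im_pos]
  exact mul_ne_zero two_ne_zero (mul_ne_zero h.vartheta₁_ne_zero h.vartheta₄_ne_zero)

lemma vartheta₁_half_ne_zero (h : IsThetaRegular u τ) : ϑ₁ 0 u (τ / 2) ≠ 0 :=
  left_ne_zero_of_mul h.vartheta₁_half_mul_vartheta₂_half_ne_zero

lemma vartheta₂_zero_half_ne_zero (h : IsThetaRegular u τ) : ϑ₂ 0 0 (τ / 2) ≠ 0 :=
  right_ne_zero_of_mul h.vartheta₁_half_mul_vartheta₂_half_ne_zero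

lemma hasDerivAt_zeta1_half (h : IsThetaRegular u τ) :
    HasDerivAt (zeta1 · (τ / 2)) (-wp1 u (τ / 2)) u :=
  hasDerivAt_zeta1 h.im_half_pos (theta1_eq_thetaSeries u (τ / 2) ▸ h.vartheta₁_half_ne_zero)

lemma zeta1_half_eq_div (h : IsThetaRegular u τ) :
    zeta1 u (τ / 2) = ϑ₁ 1 u (τ / 2) / ϑ₁ 0 u (τ / 2) :=
  zeta1_eq_thetaMoment u h.im_half_pos

lemma Sp_eq_div (h : IsThetaRegular u τ) :
    Sp u τ = ϑ₁ 1 0 (τ / 2) / ϑ₂ 0 0 (τ / 2) * (ϑ₂ 0 u (τ / 2) / ϑ₁ 0 u (τ / 2)) := by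
  rw [div_mul_div_comm, deriv_vartheta₁_zero_mul_vartheta₂_half u h.im_pos, mul_comm (ϑ₂ 0 0 _),
    vartheta₁_mul_vartheta₂_zero_half u h.im_pos, Sp_eq_thetaMoment u h.im_pos, thetaMoment,
    thetaMoment, div_sub_div _ _ h.vartheta₁_ne_zero h.vartheta₄_ne_zero,
    mul_div_mul_left _ _ two_ne_zero]

lemma Spp_eq_div (h : IsThetaRegular u τ) :
    Spp u τ = ϑ₁ 1 0 (τ / 2) / ϑ₂ 0 0 (τ / 2) *
      ((ϑ₂ 1 u (τ / 2) * ϑ₁ 0 u (τ / 2) - ϑ₂ 0 u (τ / 2) * ϑ₁ 1 u (τ / 2)) /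
        ϑ₁ 0 u (τ / 2) ^ 2) := by
  have hquot : (Sp · τ) =ᶠ[𝓝 u] fun v ↦
      ϑ₁ 1 0 (τ / 2) / ϑ₂ 0 0 (τ / 2) * (ϑ₂ 0 v (τ / 2) / ϑ₁ 0 v (τ / 2)) :=
    h.eventually_nhds.mono fun _ hv ↦ hv.Sp_eq_div
  rw [Spp, hquot.deriv_eq]
  exact (((hasDerivAt_thetaSeries _ 0 u h.im_half_pos).fun_div
    (hasDerivAt_thetaSeries _ 0 u h.im_half_pos) h.vartheta₁_half_ne_zero).const_mul _).deriv

lemma heatFlux_eq (h : IsThetaRegular u τ) :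
    heatFlux u τ = Spp u τ + Sp u τ * zeta1 u (τ / 2) := by
  have hzeta : zeta1 u (τ / 2) =
      thetaMoment theta1Weight 1 u τ + thetaMoment theta4Weight 1 u τ := by
    rw [zeta1_half_eq_div h, ← mul_div_mul_right _ _ h.vartheta₂_zero_half_ne_zero,
      deriv_vartheta₁_mul_vartheta₂_zero_half u h.im_pos,
      vartheta₁_mul_vartheta₂_zero_half u h.im_pos, mul_div_mul_left _ _ two_ne_zero, thetaMoment,
      thetaMoment, div_add_div _ _ h.vartheta₁_ne_zero h.vartheta₄_ne_zero]
  rw [h.Spp_eq_deriv_thetaMoment, (hasDerivAt_thetaMoment _ 1 h.im_pos h.vartheta₁_ne_zero).deriv,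
    (hasDerivAt_thetaMoment _ 1 h.im_pos h.vartheta₄_ne_zero).deriv,
    Sp_eq_thetaMoment u h.im_pos, hzeta, heatFlux]
  ring

lemma heatFlux_eq_div (h : IsThetaRegular u τ) :
    heatFlux u τ = ϑ₁ 1 0 (τ / 2) / ϑ₂ 0 0 (τ / 2) * (ϑ₂ 1 u (τ / 2) / ϑ₁ 0 u (τ / 2)) := by
  have h0 := h.vartheta₁_half_ne_zero
  rw [h.heatFlux_eq, h.Spp_eq_div, h.Sp_eq_div, h.zeta1_half_eq_div]
  field_simp
  ring

theorem Sp_mul_Sp (hx : IsThetaRegular x τ) (hy : IsThetaRegular y τ)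
    (hxy : IsThetaRegular (x + y) τ) :
    Sp x τ * Sp y τ =
      Sp (x + y) τ * (zeta1 x (τ / 2) + zeta1 y (τ / 2)) - heatFlux (x + y) τ := by
  have hx0 := hx.vartheta₁_half_ne_zero
  have hy0 := hy.vartheta₁_half_ne_zero
  have hxy0 := hxy.vartheta₁_half_ne_zero
  have h0 := hx.vartheta₂_zero_half_ne_zero
  rw [hx.Sp_eq_div, hy.Sp_eq_div, hxy.Sp_eq_div, hxy.heatFlux_eq_div, hx.zeta1_half_eq_div,
    hy.zeta1_half_eq_div]
  field_simp
  linear_combination -(ϑ₁ 1 0 (τ / 2)) * vartheta_three_term x y hx.im_pos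

theorem Sp_mul_Spp (hx : IsThetaRegular x τ) (hy : IsThetaRegular y τ)
    (hxy : IsThetaRegular (x + y) τ) :
    Sp x τ * Spp y τ = Spp (x + y) τ * (zeta1 x (τ / 2) + zeta1 y (τ / 2)) -
      Sp (x + y) τ * wp1 y (τ / 2) - deriv (heatFlux · τ) (x + y) := by
  have hadd : (fun v ↦ Sp x τ * Sp v τ) =ᶠ[𝓝 y] fun v ↦
      Sp (x + v) τ * (zeta1 x (τ / 2) + zeta1 v (τ / 2)) - heatFlux (x + v) τ := by
    filter_upwards [hy.eventually_nhds,
      (continuous_const_add x).continuousAt.eventually hxy.eventually_nhds] with v hv hxv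
    exact hx.Sp_mul_Sp hv hxv
  have hleft := (hy.hasDerivAt_Sp.const_mul (Sp x τ)).congr_of_eventuallyEq hadd.symm
  have hright := ((hxy.hasDerivAt_Sp.comp_const_add x y).fun_mul
    (hy.hasDerivAt_zeta1_half.const_add (zeta1 x (τ / 2)))).fun_sub
    (hxy.hasDerivAt_heatFlux.differentiableAt.hasDerivAt.comp_const_add x y)
  rw [hleft.unique hright]
  ring

theorem Spp_mul_Spp (hx : IsThetaRegular x τ) (hy : IsThetaRegular y τ)
    (hxy : IsThetaRegular (x + y) τ) :
    Spp x τ * Spp y τ = Sppp (x + y) τ * (zeta1 x (τ / 2) + zeta1 y (τ / 2)) -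
      Spp (x + y) τ * (wp1 x (τ / 2) + wp1 y (τ / 2)) - deriv (deriv (heatFlux · τ)) (x + y) := by
  have hadd : (fun v ↦ Sp v τ * Spp y τ) =ᶠ[𝓝 x] fun v ↦
      Spp (v + y) τ * (zeta1 v (τ / 2) + zeta1 y (τ / 2)) -
        Sp (v + y) τ * wp1 y (τ / 2) - deriv (heatFlux · τ) (v + y) := by
    filter_upwards [hx.eventually_nhds,
      (continuous_add_const y).continuousAt.eventually hxy.eventually_nhds] with v hv hvy
    exact hv.Sp_mul_Spp hy hvy
  have hleft := (hx.hasDerivAt_Sp.mul_const (Spp y τ)).congr_of_eventuallyEq hadd.symm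
  have hright := (((hxy.hasDerivAt_Spp.comp_add_const x y).fun_mul
    (hx.hasDerivAt_zeta1_half.add_const (zeta1 y (τ / 2)))).fun_sub
    ((hxy.hasDerivAt_Sp.comp_add_const x y).mul_const (wp1 y (τ / 2)))).fun_sub
    (hxy.hasDerivAt_deriv_heatFlux.differentiableAt.hasDerivAt.comp_add_const x y)
  rw [hleft.unique hright]
  ring

end IsThetaRegular

/-! ### Evolution along the elliptic Gibbons–Tsarev system -/

section GibbonsTsarev

variable {𝕜 E ι : Type*} [NontriviallyNormedField 𝕜] [NormedAlgebra 𝕜 ℂ] [NormedAddCommGroup E]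
  [NormedSpace 𝕜 E]

lemma hasFDerivAt_comp_pair {F : ℂ → ℂ → ℂ} {a b : ℂ} {f t : E → ℂ} {x : E}
    (hF : HasFDerivAt (fun p : ℂ × ℂ ↦ F p.1 p.2) (a • fst ℂ ℂ ℂ + b • snd ℂ ℂ ℂ) (f x, t x))
    (hf : DifferentiableAt 𝕜 f x) (ht : DifferentiableAt 𝕜 t x) :
    HasFDerivAt (fun y ↦ F (f y) (t y)) (a • fderiv 𝕜 f x + b • fderiv 𝕜 t x) x := by
  refine ((hF.restrictScalars 𝕜).comp x (hf.hasFDerivAt.prodMk ht.hasFDerivAt)).congr_fderiv ?_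
  ext v
  simp

/-- The elliptic Gibbons–Tsarev system at the point `x`, for a family `e` of directions playing the
role of the coordinate vectors `∂/∂λⱼ`. Differentiability is part of the notion because `fderiv`
is zero at points of non-differentiability. -/
structure IsGibbonsTsarevAt (𝕜 : Type*) [NontriviallyNormedField 𝕜] [NormedAlgebra 𝕜 ℂ]
    [NormedSpace 𝕜 E] (e : ι → E) (ξ : ι → E → ℂ) (τ : E → ℂ) (x : E) : Prop where
  differentiableAt_xi : ∀ i, DifferentiableAt 𝕜 (ξ i) x
  differentiableAt_tau : DifferentiableAt 𝕜 τ x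
  differentiableAt_fderiv_tau : ∀ i, DifferentiableAt 𝕜 (fun y ↦ fderiv 𝕜 τ y (e i)) x
  fderiv_xi : ∀ j k, j ≠ k → fderiv 𝕜 (ξ k) x (e j) =
    κ * (zeta1 (ξ j x - ξ k x) (τ x / 2) - zeta1 (ξ j x) (τ x / 2)) * fderiv 𝕜 τ x (e j)
  fderiv_fderiv_tau : ∀ j k, j ≠ k → fderiv 𝕜 (fun y ↦ fderiv 𝕜 τ y (e j)) x (e k) =
    1 / (2 * π * I) * wp1 (ξ k x - ξ j x) (τ x / 2) * fderiv 𝕜 τ x (e k) * fderiv 𝕜 τ x (e j)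

/-- The coefficient `Γᵢⱼ` of the linear system `∂Rᵢ/∂λⱼ = Γᵢⱼ (Rⱼ - Rᵢ)`, for directions `e` in
place of the coordinate vectors. -/
noncomputable def tsarevCoeff (𝕜 : Type*) [NontriviallyNormedField 𝕜] [NormedAlgebra 𝕜 ℂ]
    [NormedSpace 𝕜 E] (e : ι → E) (ξ : ι → E → ℂ) (τ : E → ℂ) (i j : ι) (x : E) : ℂ :=
  -κ * (Sp (ξ j x) (τ x) / Sp (ξ i x) (τ x)) * Spp (ξ i x - ξ j x) (τ x) * fderiv 𝕜 τ x (e j)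

namespace IsGibbonsTsarevAt

variable {e : ι → E} {ξ : ι → E → ℂ} {τ : E → ℂ} {x : E} {i j k : ι}

lemma of_contDiffAt (hξ : ∀ i, DifferentiableAt 𝕜 (ξ i) x) (hτ : ContDiffAt 𝕜 2 τ x)
    (hfderiv_xi : ∀ j k, j ≠ k → fderiv 𝕜 (ξ k) x (e j) =
      κ * (zeta1 (ξ j x - ξ k x) (τ x / 2) - zeta1 (ξ j x) (τ x / 2)) * fderiv 𝕜 τ x (e j))
    (hfderiv_fderiv_tau : ∀ j k, j ≠ k → fderiv 𝕜 (fun y ↦ fderiv 𝕜 τ y (e j)) x (e k) =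
      1 / (2 * π * I) * wp1 (ξ k x - ξ j x) (τ x / 2) * fderiv 𝕜 τ x (e k) *
        fderiv 𝕜 τ x (e j)) :
    IsGibbonsTsarevAt 𝕜 e ξ τ x where
  differentiableAt_xi := hξ
  differentiableAt_tau := hτ.differentiableAt two_ne_zero
  differentiableAt_fderiv_tau _ :=
    ((hτ.fderiv_right (m := 1) one_add_one_eq_two.le).differentiableAt one_ne_zero).clm_apply
      (differentiableAt_const _)
  fderiv_xi := hfderiv_xi
  fderiv_fderiv_tau := hfderiv_fderiv_tau

lemma differentiableAt_Sp (h : IsGibbonsTsarevAt 𝕜 e ξ τ x)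
    (hi : IsThetaRegular (ξ i x) (τ x)) :
    DifferentiableAt 𝕜 (fun y ↦ Sp (ξ i y) (τ y)) x :=
  (hasFDerivAt_comp_pair hi.hasFDerivAt_Sp (h.differentiableAt_xi i)
    h.differentiableAt_tau).differentiableAt

lemma differentiableAt_Spp (h : IsGibbonsTsarevAt 𝕜 e ξ τ x)
    (hij : IsThetaRegular (ξ i x - ξ j x) (τ x)) :
    DifferentiableAt 𝕜 (fun y ↦ Spp (ξ i y - ξ j y) (τ y)) x :=
  (hasFDerivAt_comp_pair hij.hasFDerivAt_Spp
    ((h.differentiableAt_xi i).fun_sub (h.differentiableAt_xi j))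
    h.differentiableAt_tau).differentiableAt

lemma fderiv_Sp (h : IsGibbonsTsarevAt 𝕜 e ξ τ x) (hkj : k ≠ j)
    (hj : IsThetaRegular (ξ j x) (τ x)) (hk : IsThetaRegular (ξ k x) (τ x))
    (hjk : IsThetaRegular (ξ j x - ξ k x) (τ x)) :
    fderiv 𝕜 (fun y ↦ Sp (ξ j y) (τ y)) x (e k) = -κ * fderiv 𝕜 τ x (e k) *
      (Sp (ξ j x) (τ x) * wp1 (ξ k x - ξ j x) (τ x / 2) +
        Sp (ξ k x) (τ x) * Spp (ξ j x - ξ k x) (τ x)) := by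
  have hsum : ξ k x + (ξ j x - ξ k x) = ξ j x := add_sub_cancel ..
  have hadd := hk.Sp_mul_Spp hjk (by rwa [hsum])
  have hwp := wp1_neg (ξ j x - ξ k x) hk.im_half_pos
  have hzeta := zeta1_neg (ξ j x - ξ k x) hk.im_half_pos
  rw [neg_sub] at hwp hzeta
  rw [hsum] at hadd
  have hcomp := hasFDerivAt_comp_pair hj.hasFDerivAt_Sp (h.differentiableAt_xi j)
    h.differentiableAt_tau
  rw [hcomp.fderiv]
  simp only [add_apply, smul_apply, smul_eq_mul,
    h.fderiv_xi k j hkj, hzeta, hwp]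
  linear_combination κ * fderiv 𝕜 τ x (e k) * hadd

lemma fderiv_Spp (h : IsGibbonsTsarevAt 𝕜 e ξ τ x) (hki : k ≠ i) (hkj : k ≠ j)
    (hij : IsThetaRegular (ξ i x - ξ j x) (τ x)) (hik : IsThetaRegular (ξ i x - ξ k x) (τ x))
    (hkj' : IsThetaRegular (ξ k x - ξ j x) (τ x)) :
    fderiv 𝕜 (fun y ↦ Spp (ξ i y - ξ j y) (τ y)) x (e k) = -κ * fderiv 𝕜 τ x (e k) *
      (Spp (ξ i x - ξ j x) (τ x) *
          (wp1 (ξ k x - ξ i x) (τ x / 2) + wp1 (ξ k x - ξ j x) (τ x / 2)) +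
        Spp (ξ i x - ξ k x) (τ x) * Spp (ξ k x - ξ j x) (τ x)) := by
  have hsum : ξ i x - ξ k x + (ξ k x - ξ j x) = ξ i x - ξ j x := sub_add_sub_cancel ..
  have hadd := hik.Spp_mul_Spp hkj' (by rwa [hsum])
  have hwp := wp1_neg (ξ i x - ξ k x) hik.im_half_pos
  have hzeta := zeta1_neg (ξ i x - ξ k x) hik.im_half_pos
  rw [neg_sub] at hwp hzeta
  rw [hsum] at hadd
  have hcomp := hasFDerivAt_comp_pair hij.hasFDerivAt_Spp
    ((h.differentiableAt_xi i).fun_sub (h.differentiableAt_xi j)) h.differentiableAt_tau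
  rw [hcomp.fderiv, fderiv_fun_sub (h.differentiableAt_xi i) (h.differentiableAt_xi j)]
  simp only [add_apply, sub_apply,
    smul_apply, smul_eq_mul, h.fderiv_xi k i hki, h.fderiv_xi k j hkj, hzeta,
    hwp]
  linear_combination κ * fderiv 𝕜 τ x (e k) * hadd

lemma fderiv_tsarevCoeff_apply (h : IsGibbonsTsarevAt 𝕜 e ξ τ x)
    (hi : IsThetaRegular (ξ i x) (τ x)) (hj : IsThetaRegular (ξ j x) (τ x))
    (hij : IsThetaRegular (ξ i x - ξ j x) (τ x)) (hSi : Sp (ξ i x) (τ x) ≠ 0) (v : E) :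
    fderiv 𝕜 (tsarevCoeff 𝕜 e ξ τ i j) x v = -κ / Sp (ξ i x) (τ x) *
      (fderiv 𝕜 (fun y ↦ Sp (ξ j y) (τ y)) x v * Spp (ξ i x - ξ j x) (τ x) * fderiv 𝕜 τ x (e j) +
        Sp (ξ j x) (τ x) * fderiv 𝕜 (fun y ↦ Spp (ξ i y - ξ j y) (τ y)) x v *
          fderiv 𝕜 τ x (e j) +
        Sp (ξ j x) (τ x) * Spp (ξ i x - ξ j x) (τ x) *
          fderiv 𝕜 (fun y ↦ fderiv 𝕜 τ y (e j)) x v) -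
      tsarevCoeff 𝕜 e ξ τ i j x * fderiv 𝕜 (fun y ↦ Sp (ξ i y) (τ y)) x v / Sp (ξ i x) (τ x) := by
  have hinv := (hasDerivAt_inv hSi).comp_hasFDerivAt x (h.differentiableAt_Sp hi).hasFDerivAt
  have hprod := ((((h.differentiableAt_Sp hj).hasFDerivAt.mul hinv).const_mul (-κ)).mul
    (h.differentiableAt_Spp hij).hasFDerivAt).mul (h.differentiableAt_fderiv_tau j).hasFDerivAt
  have hcoeff : HasFDerivAt (tsarevCoeff 𝕜 e ξ τ i j) _ x := hprod
  rw [hcoeff.fderiv]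
  simp only [tsarevCoeff, Pi.mul_apply, Function.comp_apply, add_apply, smul_apply,
    smul_eq_mul]
  field_simp
  ring

theorem fderiv_tsarevCoeff (h : IsGibbonsTsarevAt 𝕜 e ξ τ x)
    (hij : i ≠ j) (hjk : j ≠ k) (hik : i ≠ k)
    (hξ : ∀ i, IsThetaRegular (ξ i x) (τ x))
    (hdiff : ∀ i j, i ≠ j → IsThetaRegular (ξ i x - ξ j x) (τ x))
    (hS : ∀ i, Sp (ξ i x) (τ x) ≠ 0) :
    fderiv 𝕜 (tsarevCoeff 𝕜 e ξ τ i j) x (e k) =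
      tsarevCoeff 𝕜 e ξ τ i j x * tsarevCoeff 𝕜 e ξ τ j k x +
        tsarevCoeff 𝕜 e ξ τ i k x * tsarevCoeff 𝕜 e ξ τ k j x -
        tsarevCoeff 𝕜 e ξ τ i k x * tsarevCoeff 𝕜 e ξ τ i j x := by
  have hSi := hS i
  have hSj := hS j
  have hSk := hS k
  have h2κ : 1 / (2 * π * I) = 2 * κ := by
    field_simp
    norm_num
  rw [h.fderiv_tsarevCoeff_apply (hξ i) (hξ j) (hdiff i j hij) hSi,
    h.fderiv_Sp hjk.symm (hξ j) (hξ k) (hdiff j k hjk),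
    h.fderiv_Sp hik.symm (hξ i) (hξ k) (hdiff i k hik),
    h.fderiv_Spp hik.symm hjk.symm (hdiff i j hij) (hdiff i k hik) (hdiff k j hjk.symm),
    h.fderiv_fderiv_tau j k hjk, h2κ]
  simp only [tsarevCoeff]
  generalize κ = c
  field_simp
  ring

end IsGibbonsTsarevAt

theorem tsarev_compatibility_general {e : ι → E} {ξ : ι → E → ℂ} {τ : E → ℂ} {x : E} {i j k : ι}
    (h : IsGibbonsTsarevAt 𝕜 e ξ τ x) (hξ : ∀ i, IsThetaRegular (ξ i x) (τ x))
    (hdiff : ∀ i j, i ≠ j → IsThetaRegular (ξ i x - ξ j x) (τ x))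
    (hS : ∀ i, Sp (ξ i x) (τ x) ≠ 0) (hij : i ≠ j) (hjk : j ≠ k) (hik : i ≠ k) :
    fderiv 𝕜 (tsarevCoeff 𝕜 e ξ τ i j) x (e k) =
        tsarevCoeff 𝕜 e ξ τ i j x * tsarevCoeff 𝕜 e ξ τ j k x +
          tsarevCoeff 𝕜 e ξ τ i k x * tsarevCoeff 𝕜 e ξ τ k j x -
          tsarevCoeff 𝕜 e ξ τ i k x * tsarevCoeff 𝕜 e ξ τ i j x ∧
      fderiv 𝕜 (tsarevCoeff 𝕜 e ξ τ i j) x (e k) = fderiv 𝕜 (tsarevCoeff 𝕜 e ξ τ i k) x (e j) := by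
  have hjk_deriv := h.fderiv_tsarevCoeff hij hjk hik hξ hdiff hS
  have hkj_deriv := h.fderiv_tsarevCoeff hik hjk.symm hij hξ hdiff hS
  exact ⟨hjk_deriv, by rw [hjk_deriv, hkj_deriv]; ring⟩

end GibbonsTsarev

/-- Tsarev compatibility of the system for R_i (Proposition, part (i), identity (c101)):
under the elliptic Gibbons–Tsarev system, ∂Γ_{ij}/∂λ_k = Γ_{ij}Γ_{jk} + Γ_{ik}Γ_{kj} − Γ_{ik}Γ_{ij},
and in particular ∂Γ_{ij}/∂λ_k = ∂Γ_{ik}/∂λ_j. -/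
theorem tsarev_compatibility
    (N : ℕ) (U : Set (Fin N → ℝ)) (hU : IsOpen U)
    (ξ : Fin N → (Fin N → ℝ) → ℂ) (τ : (Fin N → ℝ) → ℂ)
    (hξC2 : ∀ i, ContDiffOn ℝ 2 (ξ i) U)
    (hτC2 : ContDiffOn ℝ 2 τ U)
    (hup : ∀ x ∈ U, 0 < (τ x).im)
    -- the elliptic Gibbons–Tsarev system
    (hGT1 : ∀ j k : Fin N, j ≠ k → ∀ x ∈ U,
      pdC j (ξ k) x = 1 / (4 * (Real.pi : ℂ) * Complex.I)
        * (zeta1 (ξ j x - ξ k x) (τ x / 2) - zeta1 (ξ j x) (τ x / 2)) * pdC j τ x)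
    (hGT2 : ∀ j k : Fin N, j ≠ k → ∀ x ∈ U,
      pdC k (pdC j τ) x = 1 / (2 * (Real.pi : ℂ) * Complex.I)
        * wp1 (ξ k x - ξ j x) (τ x / 2) * pdC k τ x * pdC j τ x)
    -- nonvanishing of the theta-function values appearing in denominators
    (hnz1 : ∀ i, ∀ x ∈ U, theta1 (ξ i x) (τ x) ≠ 0)
    (hnz2 : ∀ i, ∀ x ∈ U, theta4 (ξ i x) (τ x) ≠ 0)
    (hnz3 : ∀ i, ∀ x ∈ U, theta1 (ξ i x) (τ x / 2) ≠ 0)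
    (hnz4 : ∀ i j : Fin N, i ≠ j → ∀ x ∈ U, theta1 (ξ i x - ξ j x) (τ x) ≠ 0)
    (hnz5 : ∀ i j : Fin N, i ≠ j → ∀ x ∈ U, theta4 (ξ i x - ξ j x) (τ x) ≠ 0)
    (hnz6 : ∀ i j : Fin N, i ≠ j → ∀ x ∈ U, theta1 (ξ i x - ξ j x) (τ x / 2) ≠ 0)
    (hnzS : ∀ i, ∀ x ∈ U, Sp (ξ i x) (τ x) ≠ 0) :
    ∀ i j k : Fin N, i ≠ j → j ≠ k → i ≠ k → ∀ x ∈ U,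
      pdC k (Gam ξ τ i j) x
          = Gam ξ τ i j x * Gam ξ τ j k x + Gam ξ τ i k x * Gam ξ τ k j x
            - Gam ξ τ i k x * Gam ξ τ i j x
      ∧ pdC k (Gam ξ τ i j) x = pdC j (Gam ξ τ i k) x := by
  intro i j k hij hjk hik x hx
  have hsystem : IsGibbonsTsarevAt ℝ (fun j ↦ Pi.single j 1) ξ τ x :=
    .of_contDiffAt
      (fun i ↦ ((hξC2 i).contDiffAt (hU.mem_nhds hx)).differentiableAt two_ne_zero)
      (hτC2.contDiffAt (hU.mem_nhds hx)) (hGT1 · · · x hx) (hGT2 · · · x hx)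
  exact tsarev_compatibility_general hsystem (fun i ↦ ⟨hup x hx, hnz1 i x hx, hnz2 i x hx⟩)
    (fun i j hij ↦ ⟨hup x hx, hnz4 i j hij x hx, hnz5 i j hij x hx⟩) (hnzS · x hx) hij hjk hik
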